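/- The Hasse diagram of the affine Tamari lattice is an n-regular graph: for every 312-avoiding real TITO x, the number of 312-avoiding real TITOs covered by x plus the number of 312-avoiding real TITOs covering x (covers taken in the poset of 312-avoiding real TITOs under the Dyer order) equals n. -/

import Mathlib

structure TITO (n : ℕ) where
  rel : ℤ → ℤ → Prop
  refl : ∀ a, rel a a
  antisymm : ∀ a b, rel a b → rel b a → a = b
  trans : ∀ a b c, rel a b → rel b c → rel a c
  total : ∀ a b, rel a b ∨ rel b a
  invariant : ∀ a b, rel a b ↔ rel (a + n) (b + n)

namespace TITO

variable {n : ℕ}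

/-- The inversion set of a TITO. -/
def Inversions (t : TITO n) : Set (ℤ × ℤ) := {p | p.1 < p.2 ∧ t.rel p.2 p.1}

/-- A TITO is 312-avoiding if there are no integers `a < b < c` with `c ≼ a` and `a ≼ b`. -/
def Avoids312 (t : TITO n) : Prop :=
  ¬ ∃ a b c : ℤ, a < b ∧ b < c ∧ t.rel c a ∧ t.rel a b

/-- A TITO is 132-avoiding if there are no integers `a < b < c` with `a ≼ c` and `c ≼ b`. -/
def Avoids132 (t : TITO n) : Prop :=
  ¬ ∃ a b c : ℤ, a < b ∧ b < c ∧ t.rel a c ∧ t.rel c b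

/-- A set is order-convex for a TITO. -/
def OrderConvex (t : TITO n) (S : Set ℤ) : Prop :=
  ∀ x ∈ S, ∀ z ∈ S, ∀ y : ℤ, t.rel x y → t.rel y z → y ∈ S

/-- A block of a TITO: an order-convex set with no minimal and no maximal element in which
all intervals are finite. -/
def IsBlock (t : TITO n) (I : Set ℤ) : Prop :=
  t.OrderConvex I ∧
  (∀ a ∈ I, ∃ b ∈ I, b ≠ a ∧ t.rel b a) ∧
  (∀ a ∈ I, ∃ b ∈ I, b ≠ a ∧ t.rel a b) ∧
  (∀ a ∈ I, ∀ c ∈ I, t.rel a c → {b : ℤ | t.rel a b ∧ t.rel b c}.Finite)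

/-- A block is waxing if `a ≼ a + n` for every `a` in it. -/
def Waxing (t : TITO n) (I : Set ℤ) : Prop := ∀ a ∈ I, t.rel a (a + n)

/-- A block is waning if `a + n ≼ a` for every `a` in it. -/
def Waning (t : TITO n) (I : Set ℤ) : Prop := ∀ a ∈ I, t.rel (a + n) a

/-- A TITO is real if `a ≼ a + n` whenever the residue class of `a` mod `n` is order-convex. -/
def IsReal (t : TITO n) : Prop :=
  ∀ a : ℤ, t.OrderConvex {x : ℤ | ∃ k : ℤ, x = a + k * n} → t.rel a (a + n)

/-- A TITO is co-real if `a + n ≼ a` whenever the residue class of `a` mod `n` is order-convex. -/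
def IsCoReal (t : TITO n) : Prop :=
  ∀ a : ℤ, t.OrderConvex {x : ℤ | ∃ k : ℤ, x = a + k * n} → t.rel (a + n) a

/-- `(a, b)` with `a < b` is a lower wall if `b ≼ a` is a cover relation of the total order. -/
def LowerWall (t : TITO n) (a b : ℤ) : Prop :=
  a < b ∧ t.rel b a ∧ ∀ z : ℤ, z ≠ a → z ≠ b → ¬ (t.rel b z ∧ t.rel z a)

end TITO

/-- `y` covers `x` within the subposet `P` of TITOs ordered by the Dyer order. -/
def CoversIn {n : ℕ} (P : Set (TITO n)) (x y : TITO n) : Prop :=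
  x ∈ P ∧ y ∈ P ∧ x.Inversions ⊂ y.Inversions ∧
    ¬ ∃ z ∈ P, x.Inversions ⊂ z.Inversions ∧ z.Inversions ⊂ y.Inversions

/-!
A 312-avoiding TITO is determined by its bracket vector `g`, where `g a` is the largest
`b ∈ [a, a + n]` that precedes `a`, and `g a = a + n` means that all `b > a` precede `a`, so that
`a` is unbounded. Under this correspondence the Dyer order becomes the pointwise order, and a TITO
is real if and only if its unbounded positions do not form exactly one residue class.

Let `g` be real. A lower cover of `g` arises from each residue `a` with `g a ≠ a`: shorten the
bracket `[a, g a]` as little as possible, and pass to the largest real bracket vector below the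
result. An upper cover arises from each residue `v` with `g v = v`: extend the outermost bracket
ending at `v` as little as possible, and do so once more if this leaves exactly one unbounded
residue class. These are all the covers, so every one of the `n` residues contributes exactly one.
-/

theorem ncard_setOf_eq_of_equiv {α β : Type*} {P : Set β} (e : α ≃ P) {p : β → Prop}
    (hp : ∀ y, p y → y ∈ P) : {y | p y}.ncard = {a | p (e a)}.ncard := by
  rw [← Set.ncard_image_of_injective _ (Subtype.val_injective.comp e.injective)]
  congr 1
  ext y
  constructor
  · intro hy
    exact ⟨e.symm ⟨y, hp y hy⟩, by simpa using hy, by simp⟩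
  · rintro ⟨a, ha, rfl⟩
    exact ha

section CoverCounting

variable {α ι : Type*} [PartialOrder α] {x : α} {F : ι → α}

theorem ncard_lowerCovers_of_antichain (hlt : ∀ i, F i < x) (hcofinal : ∀ y < x, ∃ i, y ≤ F i)
    (hanti : ∀ i j, F i ≤ F j → i = j) : {y | y ⋖ x}.ncard = Nat.card ι := by
  have hrange : {y | y ⋖ x} = Set.range F := by
    ext y
    constructor
    · intro hy
      obtain ⟨i, hi⟩ := hcofinal y hy.lt
      exact ⟨i, (hy.eq_or_eq hi (hlt i).le).resolve_right (hlt i).ne⟩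
    · rintro ⟨i, rfl⟩
      refine ⟨hlt i, fun z hiz hzx => ?_⟩
      obtain ⟨j, hj⟩ := hcofinal z hzx
      obtain rfl := hanti i j (hiz.le.trans hj)
      exact hiz.not_ge hj
  rw [hrange, Set.ncard_range_of_injective fun i j h => hanti i j h.le]

theorem ncard_upperCovers_of_antichain (hlt : ∀ i, x < F i) (hcoinitial : ∀ y > x, ∃ i, F i ≤ y)
    (hanti : ∀ i j, F i ≤ F j → i = j) : {y | x ⋖ y}.ncard = Nat.card ι := by
  have hdual := ncard_lowerCovers_of_antichain (x := OrderDual.toDual x)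
    (F := fun i => OrderDual.toDual (F i)) hlt hcoinitial fun i j h => (hanti j i h).symm
  rw [← hdual]
  exact congrArg Set.ncard (Set.ext fun y => toDual_covBy_toDual_iff.symm)

end CoverCounting

section Congruence

variable {N a b : ℤ}

theorem exists_modEq_mem_Ico (hN : 0 < N) (a b : ℤ) :
    ∃ c, c ≡ a [ZMOD N] ∧ c ∈ Set.Ico b (b + N) := by
  obtain ⟨z, hz0, hzN, hz⟩ := Int.existsUnique_equiv (a - b) hN
  exact ⟨b + z, by simpa using hz.add_left b, by omega, by omega⟩

theorem eq_of_modEq_of_abs_sub_lt (h : a ≡ b [ZMOD N]) (hlt : |b - a| < N) : a = b :=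
  (sub_eq_zero.1 (Int.eq_zero_of_abs_lt_dvd h.dvd hlt)).symm

end Congruence

/-- A bracket vector of period `N`: the combinatorial model of a 312-avoiding TITO. The value `g a`
is the largest `b ∈ [a, a + N]` with `b ≼ a`; by 312-avoidance the integers `b > a` preceding `a`
then form the interval `(a, g a]`, except that `g a = a + N` encodes that every `b > a` precedes
`a`. -/
structure BracketVector (N : ℤ) extends AddConstMap ℤ ℤ N N where
  period_pos : 0 < N
  self_le' : ∀ a, a ≤ toFun a
  le_add' : ∀ a, toFun a ≤ a + N
  nested' : ∀ a b, toFun a < a + N → a ≤ b → b ≤ toFun a → toFun b ≤ toFun a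

namespace BracketVector

variable {N : ℤ}

instance : FunLike (BracketVector N) ℤ ℤ where
  coe g := g.toFun
  coe_injective g h hgh := by
    obtain ⟨⟨_, _⟩, _⟩ := g
    obtain ⟨⟨_, _⟩, _⟩ := h
    congr

instance : AddConstMapClass (BracketVector N) ℤ ℤ N N where
  map_add_const g := g.map_add_const'

instance : PartialOrder (BracketVector N) where
  le g h := ∀ a, g a ≤ h a
  le_refl _ _ := le_rfl
  le_trans _ _ _ hfg hgh a := (hfg a).trans (hgh a)
  le_antisymm _ _ hgh hhg := DFunLike.ext _ _ fun a => (hgh a).antisymm (hhg a)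

variable {g h y : BracketVector N} {a b c e v : ℤ}

theorem self_le (g : BracketVector N) (a : ℤ) : a ≤ g a := g.self_le' a

theorem le_add (g : BracketVector N) (a : ℤ) : g a ≤ a + N := g.le_add' a

theorem nested (g : BracketVector N) (hfin : g a < a + N) (hab : a ≤ b) (hb : b ≤ g a) :
    g b ≤ g a := g.nested' a b hfin hab hb

theorem apply_sub_self_of_modEq (g : BracketVector N) (hab : a ≡ b [ZMOD N]) :
    g a - a = g b - b := by
  obtain ⟨k, rfl⟩ := Int.modEq_iff_add_fac.1 hab
  have hk : g (a + k * N) = g a + k * N := AddConstMapClass.map_add_zsmul g a k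
  rw [mul_comm N k, hk]
  ring

theorem lt_iff : g < h ↔ g ≤ h ∧ ∃ a, g a < h a :=
  lt_iff_le_not_ge.trans (and_congr_right fun _ => not_forall.trans (by simp only [not_le]))

section Update

/-- The interval `(a, v]` is closed under taking values of `g`: no bracket opened inside it closes
outside of it. -/
def IsClosedOn (g : BracketVector N) (a v : ℤ) : Prop :=
  ∀ b, a < b → b ≤ v → g b ≤ v

/-- Replaces the value of `g` at `a` by `v`, and likewise on the whole residue class of `a`. The
last two hypotheses are what remains of nestedness: the new bracket `[a, v]` contains those opened
inside it and is contained in those around `a`. -/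
def update (g : BracketVector N) (a v : ℤ) (hav : a ≤ v) (hva : v ≤ a + N)
    (hinside : v < a + N → g.IsClosedOn a v)
    (haround : ∀ e, g e < e + N → e < a → a ≤ g e → v ≤ g e) : BracketVector N where
  toFun e := if e ≡ a [ZMOD N] then v + (e - a) else g e
  map_add_const' e := by
    simp only [Int.add_modulus_modEq_iff, AddConstMapClass.map_add_const g]
    split_ifs <;> ring
  period_pos := g.period_pos
  self_le' e := by
    have := g.self_le e
    split_ifs <;> omega
  le_add' e := by
    have := g.le_add e
    split_ifs <;> omega
  nested' e b hfin heb hb := by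
    by_cases he : e ≡ a [ZMOD N] <;> by_cases hba : b ≡ a [ZMOD N] <;>
      simp only [he, hba, if_true, if_false] at hfin hb ⊢
    · obtain rfl := eq_of_modEq_of_abs_sub_lt (he.trans hba.symm) (abs_lt.2 (by omega))
      exact le_rfl
    · have hshift : b - (e - a) ≡ b [ZMOD N] := by
        simpa using (Int.ModEq.rfl (a := b)).sub (he.sub_right a)
      have hne : b ≠ e := by rintro rfl; exact hba he
      have := g.apply_sub_self_of_modEq hshift
      have := hinside (by omega) (b - (e - a)) (by omega) (by omega)
      omega
    · have hshift : e - (b - a) ≡ e [ZMOD N] := by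
        simpa using (Int.ModEq.rfl (a := e)).sub (hba.sub_right a)
      have hne : e ≠ b := by rintro rfl; exact he hba
      have := g.apply_sub_self_of_modEq hshift
      have := haround (e - (b - a)) (by omega) (by omega) (by omega)
      omega
    · exact g.nested hfin heb hb

variable {hav : a ≤ v} {hva : v ≤ a + N} {hinside : v < a + N → g.IsClosedOn a v}
  {haround : ∀ e, g e < e + N → e < a → a ≤ g e → v ≤ g e}

@[simp]
theorem update_apply_self : g.update a v hav hva hinside haround a = v := by
  change (if a ≡ a [ZMOD N] then v + (a - a) else g a) = v
  simp

theorem update_apply_of_not_modEq (he : ¬ e ≡ a [ZMOD N]) :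
    g.update a v hav hva hinside haround e = g e :=
  if_neg he

theorem le_of_le_at_of_le_off (hat : g a ≤ h a) (hoff : ∀ e, ¬ e ≡ a [ZMOD N] → g e ≤ h e) :
    g ≤ h := by
  intro e
  by_cases he : e ≡ a [ZMOD N]
  · have := g.apply_sub_self_of_modEq he
    have := h.apply_sub_self_of_modEq he
    omega
  · exact hoff e he

theorem update_le (hgh : g ≤ h) (hv : v ≤ h a) : g.update a v hav hva hinside haround ≤ h := by
  refine le_of_le_at_of_le_off (a := a) (by simpa using hv) fun e he => ?_
  rw [update_apply_of_not_modEq he]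
  exact hgh e

theorem le_update (hhg : h ≤ g) (hv : h a ≤ v) : h ≤ g.update a v hav hva hinside haround := by
  refine le_of_le_at_of_le_off (a := a) (by simpa using hv) fun e he => ?_
  rw [update_apply_of_not_modEq he]
  exact hhg e

end Update

section Real

/-- The bracket vectors of real TITOs: an unbounded value never occurs on a single residue class
only. -/
def IsReal (g : BracketVector N) : Prop :=
  ∀ a, g a = a + N → ∃ b, ¬ b ≡ a [ZMOD N] ∧ g b = b + N

theorem apply_eq_add_of_le (hgh : g ≤ h) (ha : g a = a + N) : h a = a + N :=
  le_antisymm (h.le_add a) (ha ▸ hgh a)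

theorem isReal_of_not_modEq (ha : g a = a + N) (hb : g b = b + N) (hab : ¬ b ≡ a [ZMOD N]) :
    g.IsReal := by
  intro c _
  by_cases hbc : b ≡ c [ZMOD N]
  · exact ⟨a, fun hac => hab (hbc.trans hac.symm), ha⟩
  · exact ⟨b, hbc, hb⟩

theorem IsReal.isReal_of_le (hg : g.IsReal) (hgh : g ≤ h) (ha : g a = a + N) : h.IsReal := by
  obtain ⟨b, hab, hb⟩ := hg a ha
  exact isReal_of_not_modEq (apply_eq_add_of_le hgh ha) (apply_eq_add_of_le hgh hb) hab

/-- `b` has an unbounded value and its residue class is the only one: the obstruction to `g` being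
real. -/
def IsLone (g : BracketVector N) (b : ℤ) : Prop :=
  g b = b + N ∧ ∀ c, g c = c + N → c ≡ b [ZMOD N]

theorem IsLone.of_modEq (hab : a ≡ b [ZMOD N]) (hb : g.IsLone b) : g.IsLone a := by
  have := g.apply_sub_self_of_modEq hab
  have := hb.1
  exact ⟨by omega, fun c hc => (hb.2 c hc).trans hab.symm⟩

theorem isReal_iff_forall_not_isLone : g.IsReal ↔ ∀ b, ¬ g.IsLone b := by
  simp only [IsReal, IsLone]
  grind

open Classical in
/-- The largest real bracket vector below `g`: a lone unbounded value `b + N` is lowered to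
`b + N - 1`. -/
noncomputable def realPart (g : BracketVector N) : BracketVector N where
  toFun b := if g.IsLone b then b + N - 1 else g b
  map_add_const' b := by
    have hiff : g.IsLone (b + N) ↔ g.IsLone b :=
      ⟨.of_modEq Int.add_modEq_right.symm, .of_modEq Int.add_modEq_right⟩
    simp only [hiff, AddConstMapClass.map_add_const g]
    split_ifs <;> ring
  period_pos := g.period_pos
  self_le' b := by
    have := g.period_pos
    have := g.self_le b
    split_ifs <;> omega
  le_add' b := by
    have := g.le_add b
    split_ifs <;> omega
  nested' a b hfin hab hb := by
    have hle : (if g.IsLone b then b + N - 1 else g b) ≤ g b := by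
      split_ifs with hlone
      · have := hlone.1
        omega
      · exact le_rfl
    by_cases ha : g.IsLone a
    · simp only [if_pos ha] at hfin hb ⊢
      rcases eq_or_lt_of_le hab with rfl | hab
      · rw [if_pos ha]
      refine hle.trans ?_
      have hbfin : g b ≠ b + N := fun hbN => hab.ne'
        (eq_of_modEq_of_abs_sub_lt (ha.2 b hbN) (abs_lt.2 (by omega)))
      by_contra! hgb
      have := g.le_add b
      have := g.nested (a := b) (b := a + N) (by omega) (by omega) (by omega)
      have := AddConstMapClass.map_add_const g a
      have := ha.1
      omega
    · simp only [if_neg ha] at hfin hb ⊢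
      exact hle.trans (g.nested hfin hab hb)

theorem realPart_apply_of_isLone (hb : g.IsLone b) : g.realPart b = b + N - 1 :=
  if_pos hb

theorem realPart_apply_of_not_isLone (hb : ¬ g.IsLone b) : g.realPart b = g b :=
  if_neg hb

theorem realPart_le (g : BracketVector N) : g.realPart ≤ g := by
  intro b
  by_cases hb : g.IsLone b
  · have := hb.1
    rw [realPart_apply_of_isLone hb]
    omega
  · rw [realPart_apply_of_not_isLone hb]

theorem isReal_realPart (g : BracketVector N) : g.realPart.IsReal := by
  intro a ha
  have hlone : ¬ g.IsLone a := fun hlone => by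
    rw [realPart_apply_of_isLone hlone] at ha
    omega
  rw [realPart_apply_of_not_isLone hlone] at ha
  obtain ⟨c, hc, hca⟩ : ∃ c, g c = c + N ∧ ¬ c ≡ a [ZMOD N] := by
    simpa [IsLone, ha] using hlone
  refine ⟨c, hca, ?_⟩
  rw [realPart_apply_of_not_isLone fun hlone => hca (hlone.2 a ha).symm, hc]

theorem IsReal.le_realPart (hy : y.IsReal) (hyg : y ≤ g) : y ≤ g.realPart := by
  intro a
  by_cases ha : g.IsLone a
  · rw [realPart_apply_of_isLone ha]
    by_contra! hlt
    obtain ⟨b, hba, hb⟩ := hy a (by have := y.le_add a; omega)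
    exact hba (ha.2 b (apply_eq_add_of_le hyg hb))
  · rw [realPart_apply_of_not_isLone ha]
    exact hyg a

end Real

section LowerCovers

/-- The largest value to which the bracket opened at `a` can be shortened; meaningful only if
`g a ≠ a`. -/
noncomputable def lowerValue (g : BracketVector N) (a : ℤ) : ℤ :=
  sSup {v | a ≤ v ∧ v < g a ∧ g.IsClosedOn a v}

theorem isGreatest_lowerValue (ha : g a ≠ a) :
    IsGreatest {v | a ≤ v ∧ v < g a ∧ g.IsClosedOn a v} (g.lowerValue a) := by
  have hbdd : BddAbove {v | a ≤ v ∧ v < g a ∧ g.IsClosedOn a v} := ⟨g a, fun v hv => hv.2.1.le⟩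
  have hmem : a ∈ {v | a ≤ v ∧ v < g a ∧ g.IsClosedOn a v} :=
    ⟨le_rfl, (g.self_le a).lt_of_ne' ha, fun b hab hba => absurd hba hab.not_ge⟩
  exact ⟨Int.csSup_mem ⟨a, hmem⟩ hbdd, fun v hv => le_csSup hbdd hv⟩

theorem lowerValue_lt (ha : g a ≠ a) : g.lowerValue a < g a :=
  (isGreatest_lowerValue ha).1.2.1

theorem isClosedOn_lowerValue (ha : g a ≠ a) : g.IsClosedOn a (g.lowerValue a) :=
  (isGreatest_lowerValue ha).1.2.2

/-- Shortens the bracket opened at `a` as little as possible. -/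
noncomputable def lower (g : BracketVector N) (a : ℤ) (ha : g a ≠ a) : BracketVector N :=
  g.update a (g.lowerValue a) (isGreatest_lowerValue ha).1.1
    ((lowerValue_lt ha).le.trans (g.le_add a)) (fun _ => isClosedOn_lowerValue ha)
    fun _ hfin hea hae => (lowerValue_lt ha).le.trans (g.nested hfin hea.le hae)

theorem lower_le (ha : g a ≠ a) : g.lower a ha ≤ g :=
  update_le le_rfl (lowerValue_lt ha).le

theorem le_lower (hyg : y ≤ g) (hlt : y a < g a) (hclosed : g.IsClosedOn a (y a))
    (ha : g a ≠ a) : y ≤ g.lower a ha :=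
  le_update hyg ((isGreatest_lowerValue ha).2 ⟨y.self_le a, hlt, hclosed⟩)

theorem realPart_lower_apply_self (ha : g a ≠ a) :
    (g.lower a ha).realPart a = g.lowerValue a := by
  have hself : g.lower a ha a = g.lowerValue a := update_apply_self
  rw [realPart_apply_of_not_isLone fun hlone => ?_, hself]
  have := hlone.1
  have := lowerValue_lt ha
  have := g.le_add a
  omega

theorem realPart_lower_lt (ha : g a ≠ a) : (g.lower a ha).realPart < g :=
  lt_iff.2 ⟨(realPart_le _).trans (lower_le ha), a, realPart_lower_apply_self ha ▸ lowerValue_lt ha⟩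

theorem IsReal.realPart_lower_apply_of_not_modEq (hg : g.IsReal) (ha : g a ≠ a)
    (hba : ¬ b ≡ a [ZMOD N]) : (g.lower a ha).realPart b = g b ∨
      (g a = a + N ∧ g b = b + N ∧ (g.lower a ha).realPart b = b + N - 1) := by
  have hoff : ∀ {e}, ¬ e ≡ a [ZMOD N] → g.lower a ha e = g e := update_apply_of_not_modEq
  by_cases hlone : (g.lower a ha).IsLone b
  · have hb : g b = b + N := hoff hba ▸ hlone.1
    refine .inr ⟨?_, hb, realPart_apply_of_isLone hlone⟩
    obtain ⟨c, hcb, hc⟩ := hg b hb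
    by_cases hca : c ≡ a [ZMOD N]
    · have := g.apply_sub_self_of_modEq hca
      omega
    · exact absurd (hlone.2 c (hoff hca ▸ hc)) hcb
  · exact .inl (by rw [realPart_apply_of_not_isLone hlone, hoff hba])

theorem IsReal.modEq_of_realPart_lower_le (hg : g.IsReal) (ha : g a ≠ a) (hb : g b ≠ b)
    (hle : (g.lower a ha).realPart ≤ (g.lower b hb).realPart) : b ≡ a [ZMOD N] := by
  by_contra hba
  have hleb := hle b
  rw [realPart_lower_apply_self hb] at hleb
  have hltb := lowerValue_lt hb
  rcases hg.realPart_lower_apply_of_not_modEq ha hba with heq | ⟨haN, _, heq⟩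
  · omega
  -- `[b, b + N - 1]` is then closed, but contains an unbounded representative of `a`.
  · obtain ⟨c, hca, hbc, hcb⟩ := exists_modEq_mem_Ico g.period_pos a b
    have hne : c ≠ b := by rintro rfl; exact hba hca
    have := g.apply_sub_self_of_modEq hca
    have := g.le_add b
    have := isClosedOn_lowerValue hb c (by omega) (by omega)
    omega

theorem exists_mem_Ico_isClosedOn_of_lt (hyg : y < g) :
    ∃ a ∈ Finset.Ico 0 N, y a < g a ∧ g.IsClosedOn a (y a) := by
  obtain ⟨-, e, he⟩ := lt_iff.1 hyg
  have hrep : ∀ b, y b < g b → ∃ c ∈ {c ∈ Finset.Ico 0 N | y c < g c}, y c - c = y b - b := by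
    intro b hb
    obtain ⟨c, hcb, hc⟩ := exists_modEq_mem_Ico g.period_pos b 0
    rw [zero_add] at hc
    have hyc := y.apply_sub_self_of_modEq hcb
    have hgc := g.apply_sub_self_of_modEq hcb
    exact ⟨c, by rw [Finset.mem_filter, Finset.mem_Ico]; exact ⟨hc, by omega⟩, hyc⟩
  obtain ⟨c, hc, -⟩ := hrep e he
  -- The shortest bracket of `y` that differs from the one of `g` contains only common brackets.
  obtain ⟨a, ha, hmin⟩ := Finset.exists_min_image {c ∈ Finset.Ico 0 N | y c < g c}
    (fun c => y c - c) ⟨c, hc⟩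
  obtain ⟨haN, hlt⟩ := Finset.mem_filter.1 ha
  refine ⟨a, haN, hlt, fun b hab hba => ?_⟩
  have hnest := y.nested (hlt.trans_le (g.le_add a)) hab.le hba
  by_contra! hgb
  obtain ⟨c, hc, hcb⟩ := hrep b (hnest.trans_lt hgb)
  have := hmin c hc
  omega

theorem ncard_lowerCovers (g : {g : BracketVector N // g.IsReal}) :
    {y | y ⋖ g}.ncard = {a ∈ Finset.Ico 0 N | ¬ g.1 a = a}.card := by
  obtain ⟨g, hg⟩ := g
  have hne : ∀ a : {a // a ∈ {a ∈ Finset.Ico 0 N | ¬ g a = a}}, g a ≠ a :=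
    fun a => (Finset.mem_filter.1 a.2).2
  rw [ncard_lowerCovers_of_antichain (F := fun a => ⟨(g.lower a (hne a)).realPart,
    isReal_realPart _⟩) (fun a => realPart_lower_lt (hne a)), Nat.card_eq_fintype_card,
    Fintype.card_coe]
  · rintro ⟨y, hy⟩ hyg
    obtain ⟨a, haN, hlt, hclosed⟩ := exists_mem_Ico_isClosedOn_of_lt hyg
    have ha : g a ≠ a := ((y.self_le a).trans_lt hlt).ne'
    exact ⟨⟨a, Finset.mem_filter.2 ⟨haN, ha⟩⟩, hy.le_realPart (le_lower hyg.le hlt hclosed ha)⟩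
  · intro a b hab
    have ha := Finset.mem_Ico.1 (Finset.mem_filter.1 a.2).1
    have hb := Finset.mem_Ico.1 (Finset.mem_filter.1 b.2).1
    exact Subtype.ext (eq_of_modEq_of_abs_sub_lt
      (hg.modEq_of_realPart_lower_le (hne a) (hne b) hab).symm (abs_lt.2 (by omega)))

end LowerCovers

section UpperCovers

/-- The leftmost position whose bracket closes at `v`; meaningful only if `g v = v`. -/
noncomputable def opener (g : BracketVector N) (v : ℤ) : ℤ :=
  sInf {a | g a = v}

theorem isLeast_opener (hv : g v = v) : IsLeast {a | g a = v} (g.opener v) := by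
  have hbdd : BddBelow {a | g a = v} := ⟨v - N, fun a ha => by
    have := g.le_add a
    rw [ha] at this
    omega⟩
  exact ⟨Int.csInf_mem ⟨v, hv⟩ hbdd, fun a ha => csInf_le hbdd ha⟩

theorem apply_opener (hv : g v = v) : g (g.opener v) = v :=
  (isLeast_opener hv).1

theorem opener_le (hv : g v = v) (ha : g a = v) : g.opener v ≤ a :=
  (isLeast_opener hv).2 ha

theorem lt_opener_add (hv : g v = v) : v < g.opener v + N := by
  refine lt_of_le_of_ne ((apply_opener hv).ge.trans (g.le_add _)) fun heq => ?_
  have := g.period_pos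
  have := g.apply_sub_self_of_modEq (a := g.opener v + N) (b := g.opener v) Int.add_modEq_right
  rw [← heq, hv, apply_opener hv] at this
  omega

/-- Extends the outermost bracket closing at `v` as little as possible: over the bracket opened at
`v + 1`. -/
noncomputable def raise (g : BracketVector N) (v : ℤ) (hv : g v = v) : BracketVector N :=
  g.update (g.opener v) (min (g (v + 1)) (g.opener v + N))
    (by
      have := opener_le hv hv
      have := g.self_le (v + 1)
      have := g.period_pos
      omega)
    (min_le_right _ _)
    (by
      intro hfin b hab hb
      have := lt_opener_add hv
      have := apply_opener hv
      have := opener_le hv hv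
      have := g.self_le (v + 1)
      by_cases hbv : b ≤ v
      · have := g.nested (a := g.opener v) (b := b) (by omega) (by omega) (by omega)
        omega
      · have := g.nested (a := v + 1) (b := b) (by omega) (by omega) (by omega)
        omega)
    (by
      intro e hfin hea hae
      have hle := g.nested hfin hea.le hae
      rw [apply_opener hv] at hle
      have hne : g e ≠ v := fun he => hea.not_ge (opener_le hv he)
      have := opener_le hv hv
      exact (min_le_left _ _).trans (g.nested hfin (by omega) (by omega)))

theorem raise_apply_opener (hv : g v = v) :
    g.raise v hv (g.opener v) = min (g (v + 1)) (g.opener v + N) :=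
  update_apply_self

theorem raise_apply_of_not_modEq_opener (hv : g v = v) (he : ¬ e ≡ g.opener v [ZMOD N]) :
    g.raise v hv e = g e :=
  update_apply_of_not_modEq he

theorem lt_raise_apply_opener (hv : g v = v) : v < g.raise v hv (g.opener v) := by
  rw [raise_apply_opener, lt_min_iff]
  exact ⟨g.self_le (v + 1), lt_opener_add hv⟩

theorem le_raise (hv : g v = v) : g ≤ g.raise v hv := by
  refine le_of_le_at_of_le_off (a := g.opener v) ?_ fun e he => ?_
  · rw [apply_opener hv]
    exact (lt_raise_apply_opener hv).le
  · rw [raise_apply_of_not_modEq_opener hv he]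

theorem apply_modEq_of_modEq_opener (hv : g v = v) (he : e ≡ g.opener v [ZMOD N]) :
    g e ≡ v [ZMOD N] := by
  have hper := g.apply_sub_self_of_modEq he
  rw [apply_opener hv] at hper
  calc g e = v + (e - g.opener v) := by omega
    _ ≡ v + (g.opener v - g.opener v) [ZMOD N] := (he.sub_right _).add_left v
    _ = v := by ring

theorem raise_apply_of_not_modEq (hv : g v = v) (he : ¬ g e ≡ v [ZMOD N]) :
    g.raise v hv e = g e :=
  raise_apply_of_not_modEq_opener hv (mt (apply_modEq_of_modEq_opener hv) he)

theorem raise_le (hv : g v = v) (hgy : g ≤ y) (hc : g c = v) (hvc : v < y c) :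
    g.raise v hv ≤ y := by
  refine update_le hgy ?_
  have := opener_le hv hc
  have := g.self_le c
  have := y.le_add (g.opener v)
  have := hgy (g.opener v)
  rw [apply_opener hv] at this
  by_contra! hlt
  have := y.nested (a := g.opener v) (b := c) (by omega) (by omega) (by omega)
  have := y.nested (a := g.opener v) (b := v + 1) (by omega) (by omega) (by omega)
  have := hgy (v + 1)
  omega

theorem IsReal.apply_ne_add_of_not_isReal_raise (hg : g.IsReal) (hv : g v = v)
    (hnot : ¬ (g.raise v hv).IsReal) (a : ℤ) : g a ≠ a + N :=
  fun ha => hnot (hg.isReal_of_le (le_raise hv) ha)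

theorem IsReal.raise_apply_opener_of_not_isReal (hg : g.IsReal) (hv : g v = v)
    (hnot : ¬ (g.raise v hv).IsReal) :
    g.raise v hv (g.opener v) = g.opener v + N := by
  obtain ⟨c, hc, -⟩ : ∃ c, (g.raise v hv).IsLone c := by
    simpa only [isReal_iff_forall_not_isLone, not_forall, not_not] using hnot
  have hca : c ≡ g.opener v [ZMOD N] := by
    by_contra hca
    rw [raise_apply_of_not_modEq_opener hv hca] at hc
    exact hg.apply_ne_add_of_not_isReal_raise hv hnot c hc
  have := (g.raise v hv).apply_sub_self_of_modEq hca
  omega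

theorem IsReal.opener_of_not_isReal_raise (hg : g.IsReal) (hv : g v = v)
    (hnot : ¬ (g.raise v hv).IsReal) : g.opener v = v - N + 1 := by
  have hmin := hg.raise_apply_opener_of_not_isReal hv hnot
  rw [raise_apply_opener, min_eq_right_iff] at hmin
  have hfin := (g.le_add (v + 1)).lt_of_ne (hg.apply_ne_add_of_not_isReal_raise hv hnot _)
  have := lt_opener_add hv
  have hnest := g.nested hfin (by omega) hmin
  rw [AddConstMapClass.map_add_const g, apply_opener hv] at hnest
  have := g.apply_sub_self_of_modEq (a := v + 1) (b := v - N + 1)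
    (by rw [sub_add_eq_add_sub, Int.modEq_sub_modulus_iff])
  have := opener_le hv (a := v - N + 1) (by omega)
  omega

theorem IsReal.apply_eq_of_not_isReal_raise (hg : g.IsReal) (hv : g v = v)
    (hnot : ¬ (g.raise v hv).IsReal) : g (v - N + 1) = v := by
  rw [← hg.opener_of_not_isReal_raise hv hnot, apply_opener hv]

theorem IsReal.raise_apply_self_of_not_isReal (hg : g.IsReal) (hv : g v = v)
    (hnot : ¬ (g.raise v hv).IsReal) (hN : 1 < N) : g.raise v hv v = v := by
  rw [raise_apply_of_not_modEq_opener hv fun hmod => ?_, hv]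
  have := hg.opener_of_not_isReal_raise hv hnot
  have := eq_of_modEq_of_abs_sub_lt hmod (abs_lt.2 (by omega))
  omega

open Classical in
/-- The upper cover of a real `g` attached to the fixed point `v`. If raising once creates a single
unbounded residue class, raising once more at the same `v` creates a second one. -/
noncomputable def upperCover (hN : 1 < N) (g : BracketVector N) (hg : g.IsReal) (v : ℤ)
    (hv : g v = v) : BracketVector N :=
  if hreal : (g.raise v hv).IsReal then g.raise v hv
  else (g.raise v hv).raise v (hg.raise_apply_self_of_not_isReal hv hreal hN)

variable {hN : 1 < N}

theorem IsReal.isReal_raise_raise (hg : g.IsReal) (hv : g v = v) (hnot : ¬ (g.raise v hv).IsReal)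
    (hv' : g.raise v hv v = v) : ((g.raise v hv).raise v hv').IsReal := by
  set h := g.raise v hv
  have hunb : h (g.opener v) = g.opener v + N := hg.raise_apply_opener_of_not_isReal hv hnot
  have hopen := hg.opener_of_not_isReal_raise hv hnot
  have := opener_le hv' hv'
  have := lt_opener_add hv'
  have hmod : ¬ h.opener v ≡ g.opener v [ZMOD N] := fun hmod => by
    have := h.apply_sub_self_of_modEq hmod
    rw [apply_opener hv'] at this
    omega
  have hunb' : h.raise v hv' (h.opener v) = h.opener v + N := by
    have := h.apply_sub_self_of_modEq (a := v + 1) (b := g.opener v)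
      (by rw [hopen, sub_add_eq_add_sub, Int.modEq_sub_modulus_iff])
    rw [raise_apply_opener, min_eq_right_iff]
    omega
  exact isReal_of_not_modEq (apply_eq_add_of_le (le_raise hv') hunb) hunb' hmod

theorem isReal_upperCover (hg : g.IsReal) (hv : g v = v) : (g.upperCover hN hg v hv).IsReal := by
  rw [upperCover]
  split_ifs with hreal
  · exact hreal
  · exact hg.isReal_raise_raise hv hreal _

theorem raise_le_upperCover (hg : g.IsReal) (hv : g v = v) :
    g.raise v hv ≤ g.upperCover hN hg v hv := by
  rw [upperCover]
  split_ifs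
  · exact le_rfl
  · exact le_raise _

theorem lt_upperCover_apply_opener (hg : g.IsReal) (hv : g v = v) :
    v < g.upperCover hN hg v hv (g.opener v) :=
  (lt_raise_apply_opener hv).trans_le (raise_le_upperCover hg hv _)

theorem lt_upperCover (hg : g.IsReal) (hv : g v = v) : g < g.upperCover hN hg v hv :=
  lt_iff.2 ⟨(le_raise hv).trans (raise_le_upperCover hg hv), g.opener v,
    (apply_opener hv).trans_lt (lt_upperCover_apply_opener hg hv)⟩

theorem upperCover_apply_of_not_modEq (hg : g.IsReal) (hv : g v = v)
    (he : ¬ g e ≡ v [ZMOD N]) : g.upperCover hN hg v hv e = g e := by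
  have hraise := raise_apply_of_not_modEq hv he
  rw [upperCover]
  split_ifs
  · exact hraise
  · rw [raise_apply_of_not_modEq _ (hraise ▸ he), hraise]

theorem IsReal.modEq_of_upperCover_le {w : ℤ} (hg : g.IsReal) (hv : g v = v) (hw : g w = w)
    (hle : g.upperCover hN hg v hv ≤ g.upperCover hN hg w hw) : v ≡ w [ZMOD N] := by
  by_contra hvw
  have := lt_upperCover_apply_opener (hN := hN) hg hv
  have hlew := hle (g.opener v)
  have hopen := apply_opener hv
  rw [upperCover_apply_of_not_modEq hg hw (hopen.symm ▸ hvw)] at hlew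
  omega

theorem upperCover_le_of_isReal_raise (hg : g.IsReal) (hv : g v = v)
    (hreal : (g.raise v hv).IsReal) (hgy : g ≤ y) (hc : g c = v) (hvc : v < y c) :
    g.upperCover hN hg v hv ≤ y := by
  rw [upperCover, dif_pos hreal]
  exact raise_le hv hgy hc hvc

theorem exists_shift_apply_eq (hmod : g b ≡ v [ZMOD N]) :
    ∃ c, c ≡ b [ZMOD N] ∧ g c = v := by
  have hcb : b + (v - g b) ≡ b [ZMOD N] := by
    simpa using ((hmod.symm.sub_right (g b)).add_left b)
  have := g.apply_sub_self_of_modEq hcb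
  exact ⟨_, hcb, by omega⟩

theorem upperCover_le_of_not_isReal_raise (hg : g.IsReal) (hv : g v = v)
    (hnot : ¬ (g.raise v hv).IsReal) (hy : y.IsReal) (hgy : g ≤ y) (hc : g c = v) (hvc : v < y c)
    (hdiff : ∀ e, g e < y e → g e ≡ v [ZMOD N]) : g.upperCover hN hg v hv ≤ y := by
  rw [upperCover, dif_neg hnot]
  have hraise : g.raise v hv ≤ y := raise_le hv hgy hc hvc
  obtain ⟨b, hba, hb⟩ :=
    hy _ (apply_eq_add_of_le hraise (hg.raise_apply_opener_of_not_isReal hv hnot))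
  have hgb : g b < b + N :=
    (g.le_add b).lt_of_ne (hg.apply_ne_add_of_not_isReal_raise hv hnot b)
  obtain ⟨d, hdb, hd⟩ := exists_shift_apply_eq (hdiff b (hb ▸ hgb))
  have hraised : g.raise v hv d = v := by
    rw [raise_apply_of_not_modEq_opener hv fun hda => hba (hdb.symm.trans hda), hd]
  have := y.apply_sub_self_of_modEq hdb
  have := g.apply_sub_self_of_modEq hdb
  exact raise_le _ hraise hraised (by omega)

theorem modEq_of_apply_eq_of_apply_eq {w : ℤ} (hv : g (v - N + 1) = v) (hw : g (w - N + 1) = w) :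
    v ≡ w [ZMOD N] := by
  obtain ⟨c, hcv, hwc, hcw⟩ := exists_modEq_mem_Ico g.period_pos v w
  have := g.apply_sub_self_of_modEq ((hcv.sub_right N).add_right 1)
  have := g.nested (a := w - N + 1) (b := c - N + 1) (by omega) (by omega) (by omega)
  obtain rfl : c = w := by omega
  exact hcv.symm

theorem apply_apply_of_lt (hfin : g c < c + N) : g (g c) = g c :=
  (g.nested hfin (g.self_le c) le_rfl).antisymm (g.self_le _)

theorem exists_mem_Ico_closing_of_lt (hc : g c < y c) :
    ∃ v ∈ Finset.Ico 0 N, g c ≡ v [ZMOD N] ∧ g v = v ∧ ∃ d, g d = v ∧ v < y d := by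
  obtain ⟨v, hvc, hv⟩ := exists_modEq_mem_Ico g.period_pos (g c) 0
  obtain ⟨d, hdc, hd⟩ := exists_shift_apply_eq hvc.symm
  have := g.apply_sub_self_of_modEq hdc
  have := y.apply_sub_self_of_modEq hdc
  have hfix := apply_apply_of_lt (g := g) (c := d) (by have := y.le_add d; omega)
  exact ⟨v, Finset.mem_Ico.2 (by simpa using hv), hvc.symm, hd ▸ hfix, d, hd, by omega⟩

theorem exists_upperCover_le (hg : g.IsReal) (hy : y.IsReal) (hgy : g < y) :
    ∃ v ∈ Finset.Ico 0 N, ∃ hv : g v = v, g.upperCover hN hg v hv ≤ y := by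
  obtain ⟨hle, e, he⟩ := lt_iff.1 hgy
  by_cases hex : ∃ v ∈ Finset.Ico 0 N, ∃ hv : g v = v,
      (g.raise v hv).IsReal ∧ ∃ d, g d = v ∧ v < y d
  · obtain ⟨v, hvN, hv, hreal, d, hd, hvd⟩ := hex
    exact ⟨v, hvN, hv, upperCover_le_of_isReal_raise hg hv hreal hle hd hvd⟩
  · push Not at hex
    have hfull : ∀ v ∈ Finset.Ico 0 N, ∀ (hv : g v = v) (d : ℤ), g d = v → v < y d →
        ¬ (g.raise v hv).IsReal := fun v hvN hv d hd hvd hreal =>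
      (hex v hvN hv hreal d hd).not_gt hvd
    obtain ⟨v, hvN, -, hv, d, hd, hvd⟩ := exists_mem_Ico_closing_of_lt he
    have hnot := hfull v hvN hv d hd hvd
    refine ⟨v, hvN, hv, upperCover_le_of_not_isReal_raise hg hv hnot hy hle hd hvd fun c hc => ?_⟩
    obtain ⟨w, hwN, hcw, hw, d', hd', hwd'⟩ := exists_mem_Ico_closing_of_lt hc
    exact hcw.trans (modEq_of_apply_eq_of_apply_eq
      (hg.apply_eq_of_not_isReal_raise hw (hfull w hwN hw d' hd' hwd'))
      (hg.apply_eq_of_not_isReal_raise hv hnot))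

theorem ncard_upperCovers (hN : 1 < N) (g : {g : BracketVector N // g.IsReal}) :
    {y | g ⋖ y}.ncard = {a ∈ Finset.Ico 0 N | g.1 a = a}.card := by
  obtain ⟨g, hg⟩ := g
  have hfix : ∀ a : {a // a ∈ {a ∈ Finset.Ico 0 N | g a = a}}, g a = a :=
    fun a => (Finset.mem_filter.1 a.2).2
  rw [ncard_upperCovers_of_antichain (F := fun a => ⟨g.upperCover hN hg a (hfix a),
    isReal_upperCover hg (hfix a)⟩) (fun a => lt_upperCover (hN := hN) hg (hfix a)),
    Nat.card_eq_fintype_card, Fintype.card_coe]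
  · rintro ⟨y, hy⟩ hgy
    obtain ⟨v, hvN, hv, hle⟩ := exists_upperCover_le (hN := hN) hg hy hgy
    exact ⟨⟨v, Finset.mem_filter.2 ⟨hvN, hv⟩⟩, hle⟩
  · intro a b hab
    have ha := Finset.mem_Ico.1 (Finset.mem_filter.1 a.2).1
    have hb := Finset.mem_Ico.1 (Finset.mem_filter.1 b.2).1
    exact Subtype.ext (eq_of_modEq_of_abs_sub_lt
      (hg.modEq_of_upperCover_le (hN := hN) (hfix a) (hfix b) hab) (abs_lt.2 (by omega)))

end UpperCovers

section ToTITO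

variable {n : ℕ}

/-- `(a, b)` is an inversion of the TITO with bracket vector `g`. -/
def Inverts (g : BracketVector N) (a b : ℤ) : Prop :=
  a < b ∧ (b ≤ g a ∨ g a = a + N)

theorem Inverts.trans (hab : g.Inverts a b) (hbc : g.Inverts b c) : g.Inverts a c := by
  have := g.le_add a
  have := g.nested (a := a) (b := b)
  simp only [Inverts] at *
  omega

theorem Inverts.of_between (hac : g.Inverts a c) (hab : a < b) (hbc : b < c) : g.Inverts a b := by
  simp only [Inverts] at *
  omega

theorem inverts_add_iff : g.Inverts (a + N) (b + N) ↔ g.Inverts a b := by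
  simp only [Inverts, AddConstMapClass.map_add_const g]
  omega

theorem inverts_of_apply_eq_add (ha : g a = a + N) (hab : a < b) : g.Inverts a b :=
  ⟨hab, .inr ha⟩

theorem Inverts.apply_eq_add (hab : g.Inverts a b) (hb : g b = b + N) : g a = a + N := by
  have := g.le_add a
  have := g.nested (a := a) (b := b)
  simp only [Inverts] at *
  omega

/-- The TITO with bracket vector `g`. -/
def toTITO (g : BracketVector n) : TITO n where
  rel a b := a = b ∨ (a < b ∧ ¬ g.Inverts a b) ∨ g.Inverts b a
  refl _ := .inl rfl
  antisymm a b hab hba := by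
    simp only [Inverts] at hab hba
    omega
  trans a b c hab hbc := by
    have := @Inverts.trans n g
    have := @Inverts.of_between n g
    have hlt : ∀ {a b}, g.Inverts a b → a < b := And.left
    grind
  total a b := by
    rcases lt_trichotomy a b with h | h | h <;> tauto
  invariant a b := by
    simp only [inverts_add_iff, add_left_inj, add_lt_add_iff_right]

theorem toTITO_rel_iff_inverts {g : BracketVector n} (hab : a < b) :
    g.toTITO.rel b a ↔ g.Inverts a b := by
  simp only [toTITO, hab.ne', hab.not_gt, false_and, false_or]

theorem mem_inversions_toTITO {g : BracketVector n} :
    (a, b) ∈ g.toTITO.Inversions ↔ g.Inverts a b :=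
  (and_congr_right toTITO_rel_iff_inverts).trans (and_iff_right_of_imp And.left)

theorem avoids312_toTITO (g : BracketVector n) : g.toTITO.Avoids312 := by
  rintro ⟨a, b, c, hab, hbc, hca, hab'⟩
  have hac := (toTITO_rel_iff_inverts (hab.trans hbc)).1 hca
  have hba := (toTITO_rel_iff_inverts hab).2 (hac.of_between hab hbc)
  exact hab.ne (g.toTITO.antisymm a b hab' hba)

theorem inversions_toTITO_subset_iff {g h : BracketVector n} :
    g.toTITO.Inversions ⊆ h.toTITO.Inversions ↔ g ≤ h := by
  constructor
  · intro hsub a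
    rcases (g.self_le a).eq_or_lt with ha | ha
    · exact ha ▸ h.self_le a
    · have := (mem_inversions_toTITO.1 (hsub (mem_inversions_toTITO.2 ⟨ha, .inl le_rfl⟩))).2
      have := g.le_add a
      omega
  · rintro hgh ⟨a, b⟩ hab
    rw [mem_inversions_toTITO] at hab ⊢
    refine ⟨hab.1, hab.2.imp (fun hb => hb.trans (hgh a)) (apply_eq_add_of_le hgh)⟩

theorem apply_eq_add_of_toTITO_rel {g : BracketVector n} (ha : g a = a + n)
    (hab : g.toTITO.rel a b) : g b = b + n := by
  rcases hab with rfl | ⟨hlt, hnot⟩ | hba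
  · exact ha
  · exact absurd (inverts_of_apply_eq_add ha hlt) hnot
  · exact hba.apply_eq_add ha

theorem toTITO_rel_add_iff {g : BracketVector n} :
    g.toTITO.rel a (a + n) ↔ g a ≠ a + n := by
  have := g.le_add a
  have := g.period_pos
  simp only [toTITO, Inverts]
  omega

theorem mem_residueClass_iff : (∃ k : ℤ, b = a + k * n) ↔ b ≡ a [ZMOD n] := by
  simp only [Int.modEq_comm (a := b), Int.modEq_iff_add_fac, mul_comm]

theorem isReal_toTITO_iff {g : BracketVector n} : g.toTITO.IsReal ↔ g.IsReal := by
  simp only [TITO.IsReal, TITO.OrderConvex, mem_residueClass_iff, Set.mem_ofPred_eq,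
    toTITO_rel_add_iff]
  constructor
  · intro hreal a ha
    by_contra! hlone
    -- Unbounded positions form a final segment of the order, here a single residue class.
    refine hreal a (fun x hxa z _ y hxy _ => ?_) ha
    by_contra hya
    have := g.apply_sub_self_of_modEq hxa
    exact hlone y hya (apply_eq_add_of_toTITO_rel (by omega) hxy)
  · intro hreal a hconvex ha
    obtain ⟨b, hba, hb⟩ := hreal a ha
    obtain ⟨c, hca, hbc, hcb⟩ := exists_modEq_mem_Ico g.period_pos a b
    have hne : b ≠ c := by rintro rfl; exact hba hca
    have hca' : c - n ≡ a [ZMOD n] := Int.sub_modulus_modEq_iff.2 hca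
    have := g.apply_sub_self_of_modEq hca'
    exact hba (hconvex c hca (c - n) hca' b
      ((toTITO_rel_iff_inverts (by omega)).2 (inverts_of_apply_eq_add hb (by omega)))
      ((toTITO_rel_iff_inverts (by omega)).2 (inverts_of_apply_eq_add (by omega) (by omega))))

end ToTITO

end BracketVector

namespace TITO

variable {n : ℕ} {t : TITO n} {a b c : ℤ}

theorem rel_iff_of_lt (hab : a < b) : t.rel a b ↔ (a, b) ∉ t.Inversions := by
  refine ⟨fun h hinv => hab.ne (t.antisymm a b h hinv.2), fun hinv => ?_⟩
  exact (t.total a b).resolve_right fun h => hinv ⟨hab, h⟩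

theorem rel_iff_of_gt (hba : b < a) : t.rel a b ↔ (b, a) ∈ t.Inversions :=
  (and_iff_right hba).symm

theorem inversions_injective : Function.Injective (Inversions : TITO n → Set (ℤ × ℤ)) := by
  intro s t hst
  have hrel : s.rel = t.rel := by
    funext a b
    rcases lt_trichotomy a b with hab | rfl | hba
    · rw [eq_iff_iff, rel_iff_of_lt hab, rel_iff_of_lt hab, hst]
    · exact propext (iff_of_true (s.refl a) (t.refl a))
    · rw [eq_iff_iff, rel_iff_of_gt hba, rel_iff_of_gt hba, hst]
  cases s
  cases t
  congr

/-- The Dyer order. -/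
instance : PartialOrder (TITO n) :=
  PartialOrder.lift Inversions inversions_injective

theorem Avoids312.rel_of_le_of_le (ht : t.Avoids312) (hab : a ≤ b) (hbc : b ≤ c)
    (hca : t.rel c a) : t.rel b a := by
  rcases hab.eq_or_lt with rfl | hab
  · exact t.refl a
  rcases hbc.eq_or_lt with rfl | hbc
  · exact hca
  · exact (t.total a b).resolve_left fun h => ht ⟨a, b, c, hab, hbc, hca, h⟩

theorem rel_add_mul_of_rel_add (ha : t.rel (a + n) a) (k : ℕ) : t.rel (a + k * n) a := by
  induction k with
  | zero => simpa using t.refl a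
  | succ k ih =>
    refine t.trans _ _ _ ?_ ha
    convert (t.invariant _ _).1 ih using 1
    push_cast
    ring

theorem Avoids312.rel_of_rel_add (ht : t.Avoids312) (hn : 0 < n) (ha : t.rel (a + n) a)
    (hab : a ≤ b) : t.rel b a := by
  refine ht.rel_of_le_of_le hab ?_ (rel_add_mul_of_rel_add ha (b - a).toNat)
  have : (1 : ℤ) ≤ n := by exact_mod_cast hn
  rw [Int.toNat_of_nonneg (by omega)]
  nlinarith

/-- The last position of the bracket opened at `a`, see `BracketVector`. -/
noncomputable def bracketEnd (t : TITO n) (a : ℤ) : ℤ :=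
  sSup {v | a ≤ v ∧ v ≤ a + n ∧ t.rel v a}

theorem isGreatest_bracketEnd (t : TITO n) (a : ℤ) :
    IsGreatest {v | a ≤ v ∧ v ≤ a + n ∧ t.rel v a} (t.bracketEnd a) := by
  have hbdd : BddAbove {v | a ≤ v ∧ v ≤ a + n ∧ t.rel v a} := ⟨a + n, fun v hv => hv.2.1⟩
  exact ⟨Int.csSup_mem ⟨a, le_rfl, by omega, t.refl a⟩ hbdd, fun v hv => le_csSup hbdd hv⟩

theorem bracketEnd_add (t : TITO n) (a : ℤ) : t.bracketEnd (a + n) = t.bracketEnd a + n := by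
  obtain ⟨⟨hle, hge, hrel⟩, hmax⟩ := t.isGreatest_bracketEnd a
  obtain ⟨⟨hle', hge', hrel'⟩, hmax'⟩ := t.isGreatest_bracketEnd (a + n)
  apply le_antisymm
  · have hback : t.rel (t.bracketEnd (a + n) - n) a :=
      (t.invariant _ _).2 (by rwa [sub_add_cancel])
    linarith [hmax ⟨by omega, by omega, hback⟩]
  · exact hmax' ⟨by omega, by omega, (t.invariant _ _).1 hrel⟩

theorem Avoids312.rel_iff_bracketEnd (ht : t.Avoids312) (hn : 0 < n) (hab : a < b) :
    t.rel b a ↔ b ≤ t.bracketEnd a ∨ t.bracketEnd a = a + n := by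
  obtain ⟨⟨-, hge, hrel⟩, hmax⟩ := t.isGreatest_bracketEnd a
  constructor
  · intro hba
    by_cases hb : b ≤ a + n
    · exact .inl (hmax ⟨hab.le, hb, hba⟩)
    · have hperiod := ht.rel_of_le_of_le (b := a + n) (by omega) (by omega) hba
      exact .inr (hge.antisymm (hmax ⟨by omega, le_rfl, hperiod⟩))
  · rintro (hb | heq)
    · exact ht.rel_of_le_of_le hab.le hb hrel
    · exact ht.rel_of_rel_add hn (heq ▸ hrel) hab.le

/-- The bracket vector of a 312-avoiding TITO. -/
noncomputable def toBracketVector (t : TITO n) (hn : 0 < n) (ht : t.Avoids312) :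
    BracketVector n where
  toFun := t.bracketEnd
  map_add_const' := t.bracketEnd_add
  period_pos := by exact_mod_cast hn
  self_le' a := (t.isGreatest_bracketEnd a).1.1
  le_add' a := (t.isGreatest_bracketEnd a).1.2.1
  nested' a b hfin hab hb := by
    obtain ⟨⟨hbe, -, hrel⟩, -⟩ := t.isGreatest_bracketEnd b
    rcases hab.eq_or_lt with rfl | hab
    · exact le_rfl
    have htrans := t.trans _ _ _ hrel ((ht.rel_iff_bracketEnd hn hab).2 (.inl hb))
    exact ((ht.rel_iff_bracketEnd hn (hab.trans_le hbe)).1 htrans).resolve_right hfin.ne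

theorem toTITO_toBracketVector (hn : 0 < n) (ht : t.Avoids312) :
    (t.toBracketVector hn ht).toTITO = t :=
  inversions_injective <| Set.ext fun _ => BracketVector.mem_inversions_toTITO.trans
    (and_congr_right fun hab => (ht.rel_iff_bracketEnd hn hab).symm)

end TITO

section CoversIn

variable {n : ℕ} {P : Set (TITO n)}

/-- The affine Tamari lattice is isomorphic to the poset of real bracket vectors. -/
noncomputable def bracketVectorOrderIso (hn : 0 < n) :
    {g : BracketVector n // g.IsReal} ≃o {t : TITO n | t.Avoids312 ∧ t.IsReal} :=
  RelIso.ofSurjective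
    (OrderEmbedding.ofMapLEIff
      (fun g => ⟨g.1.toTITO, g.1.avoids312_toTITO, BracketVector.isReal_toTITO_iff.2 g.2⟩)
      fun _ _ => BracketVector.inversions_toTITO_subset_iff)
    fun ⟨t, ht, hreal⟩ => by
      have heq := TITO.toTITO_toBracketVector hn ht
      exact ⟨⟨t.toBracketVector hn ht, BracketVector.isReal_toTITO_iff.1 (heq.symm ▸ hreal)⟩,
        Subtype.ext heq⟩

theorem coversIn_coe_iff {x y : P} : CoversIn P x y ↔ x ⋖ y := by
  refine ⟨fun ⟨_, _, hlt, hnot⟩ => ⟨hlt, fun z hxz hzy => hnot ⟨z, z.2, hxz, hzy⟩⟩, fun hxy => ?_⟩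
  exact ⟨x.2, y.2, hxy.lt, fun ⟨z, hz, hxz, hzy⟩ => hxy.2 (c := ⟨z, hz⟩) hxz hzy⟩

variable {α : Type*} [PartialOrder α]

theorem ncard_setOf_coversIn_left (e : α ≃o P) (a : α) :
    {y | CoversIn P y (e a)}.ncard = {b | b ⋖ a}.ncard := by
  simp only [ncard_setOf_eq_of_equiv e.toEquiv fun y (hy : CoversIn P y (e a)) => hy.1,
    RelIso.coe_fn_toEquiv, coversIn_coe_iff, apply_covBy_apply_iff]

theorem ncard_setOf_coversIn_right (e : α ≃o P) (a : α) :
    {y | CoversIn P (e a) y}.ncard = {b | a ⋖ b}.ncard := by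
  simp only [ncard_setOf_eq_of_equiv e.toEquiv fun y (hy : CoversIn P (e a) y) => hy.2.1,
    RelIso.coe_fn_toEquiv, coversIn_coe_iff, apply_covBy_apply_iff]

end CoversIn

theorem stmt11 (n : ℕ) (hn : 2 ≤ n) (x : TITO n) (hx : x.Avoids312 ∧ x.IsReal) :
    {y : TITO n | CoversIn {t : TITO n | t.Avoids312 ∧ t.IsReal} y x}.ncard +
      {y : TITO n | CoversIn {t : TITO n | t.Avoids312 ∧ t.IsReal} x y}.ncard = n := by
  have e := bracketVectorOrderIso (n := n) (by omega)
  obtain ⟨g, hg⟩ := e.surjective ⟨x, hx⟩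
  obtain rfl : (e g : TITO n) = x := congrArg Subtype.val hg
  rw [ncard_setOf_coversIn_left, ncard_setOf_coversIn_right, BracketVector.ncard_lowerCovers,
    BracketVector.ncard_upperCovers (by omega), add_comm, Finset.card_filter_add_card_filter_not,
    Int.card_Ico, sub_zero, Int.toNat_natCast]
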